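/- Any n-criterion set of positive-definite integer-matrix ℤ-lattices must contain the lattice I_n. Equivalently: for any finite nonempty set 𝒯 of rank-n positive-definite ℤ-lattices with I_n ∉ 𝒯, there exists a positive-definite ℤ-lattice L that represents every lattice in 𝒯 but does not represent I_n (hence L is not n-universal). -/

import Mathlib

/-!
Every positive-definite lattice `A` of rank `n` splits as `I_k ⊥ A'`, where `A'` has no vector of
norm `1`, and `k < n` unless `A ≅ I_n`. Hence `I_{n-1} ⊥ (⊥ A')`, with one summand `A'` for each
`A ∈ T`, represents all of `T`. Its vectors of norm `1` lie in `I_{n-1}`, so it contains at most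
`n - 1` orthonormal vectors and does not represent `I_n`.

Choosing a basis of `A'` can be avoided. Let `V` have as columns a maximal orthonormal system in `A`,
let `D = Vᵀ A` be the coordinate map on its span, and let `P = 1 - V D` be the projection onto the
orthogonal complement. In place of `A'` take the form `B = A + Dᵀ D` on all of `ℤⁿ`
(`exists_min_two_of_not_isometric`). It agrees with `A` on the image of `P`, so
`Dᵀ D + Pᵀ B P = A`; and it has minimum at least `2`, because `B(x) = 1` would force `A(x) = 1` and
`D x = 0`, contradicting maximality.
-/

open Matrix

/-- A (Gram matrix of a) positive-definite integral `ℤ`-lattice. -/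
def PosDefLat {ι : Type} [Fintype ι] (A : Matrix ι ι ℤ) : Prop :=
  A.IsSymm ∧ ∀ x : ι → ℤ, x ≠ 0 → 0 < x ⬝ᵥ A *ᵥ x

/-- `L` represents `A`: there is a bilinear-form-preserving `ℤ`-linear map
(automatically injective when the forms are positive definite). -/
def Represents {ι κ : Type} [Fintype ι] [Fintype κ]
    (L : Matrix ι ι ℤ) (A : Matrix κ κ ℤ) : Prop :=
  ∃ M : Matrix ι κ ℤ, Mᵀ * L * M = A

/-- Two positive-definite lattices are isometric iff each represents the other. -/
def LatIsometric {ι κ : Type} [Fintype ι] [Fintype κ]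
    (A : Matrix ι ι ℤ) (B : Matrix κ κ ℤ) : Prop :=
  Represents A B ∧ Represents B A

/-- `L` is `n`-universal: it represents every positive-definite rank-`n` lattice. -/
def NUniversal (n : ℕ) {ι : Type} [Fintype ι] (L : Matrix ι ι ℤ) : Prop :=
  ∀ A : Matrix (Fin n) (Fin n) ℤ, PosDefLat A → Represents L A

/-- An `n`-criterion set: a set of positive-definite rank-`n` lattices such that a
lattice is `n`-universal iff it represents every member of the set. -/
def IsCriterionSet (n : ℕ) (S : Finset (Matrix (Fin n) (Fin n) ℤ)) : Prop :=
  (∀ A ∈ S, PosDefLat A) ∧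
  ∀ (m : ℕ) (L : Matrix (Fin m) (Fin m) ℤ), PosDefLat L →
    (NUniversal n L ↔ ∀ A ∈ S, Represents L A)

/-- `A` is additively indecomposable: whenever an orthogonal sum `B₁ ⊥ B₂` of
positive-definite lattices represents `A` (via block components `M₁`, `M₂`),
the projection to one factor is zero. -/
def AddIndecomposable {κ : Type} [Fintype κ] (A : Matrix κ κ ℤ) : Prop :=
  ∀ (m₁ m₂ : ℕ) (B₁ : Matrix (Fin m₁) (Fin m₁) ℤ) (B₂ : Matrix (Fin m₂) (Fin m₂) ℤ),
    PosDefLat B₁ → PosDefLat B₂ →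
    ∀ (M₁ : Matrix (Fin m₁) κ ℤ) (M₂ : Matrix (Fin m₂) κ ℤ),
      M₁ᵀ * B₁ * M₁ + M₂ᵀ * B₂ * M₂ = A → M₁ = 0 ∨ M₂ = 0

/-- The Gram matrix of the `E₈` root lattice. -/
def E8 : Matrix (Fin 8) (Fin 8) ℤ :=
  !![ 2, -1,  0,  0,  0,  0,  0,  0;
     -1,  2, -1,  0,  0,  0,  0,  0;
      0, -1,  2, -1,  0,  0,  0,  0;
      0,  0, -1,  2, -1,  0,  0,  0;
      0,  0,  0, -1,  2, -1,  0, -1;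
      0,  0,  0,  0, -1,  2, -1,  0;
      0,  0,  0,  0,  0, -1,  2,  0;
      0,  0,  0,  0, -1,  0,  0,  2]

/-! ### Representations of `I_k` -/

theorem Represents.submatrix {ι κ ι' κ' : Type} [Fintype ι] [Fintype κ] [Fintype ι'] [Fintype κ']
    {L : Matrix ι ι ℤ} {A : Matrix κ κ ℤ} (h : Represents L A) (e : ι' ≃ ι) (f : κ' ≃ κ) :
    Represents (L.submatrix e e) (A.submatrix f f) := by
  obtain ⟨M, rfl⟩ := h
  refine ⟨M.submatrix e f, ?_⟩
  rw [transpose_submatrix, submatrix_mul_equiv, submatrix_mul_equiv]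

theorem represents_one_of_le {k l : ℕ} (h : k ≤ l) :
    Represents (1 : Matrix (Fin l) (Fin l) ℤ) (1 : Matrix (Fin k) (Fin k) ℤ) := by
  refine ⟨(1 : Matrix (Fin l) (Fin l) ℤ).submatrix id (Fin.castLE h), ?_⟩
  rw [transpose_submatrix, transpose_one, Matrix.mul_one]
  have := submatrix_mul (1 : Matrix (Fin l) (Fin l) ℤ) 1 (Fin.castLE h) id (Fin.castLE h)
    Function.bijective_id
  rw [← this, Matrix.mul_one, submatrix_one _ (Fin.castLE_injective h)]

theorem posDefLat_one (n : ℕ) : PosDefLat (1 : Matrix (Fin n) (Fin n) ℤ) := by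
  refine ⟨isSymm_one, fun x hx => ?_⟩
  rw [one_mulVec]
  have h0 : 0 ≤ x ⬝ᵥ x := Finset.sum_nonneg fun i _ => mul_self_nonneg (x i)
  exact lt_of_le_of_ne h0 fun h => hx (dotProduct_self_eq_zero.mp h.symm)

/-- A lattice of rank `n` that represents `I_n` is isometric to it. -/
theorem latIsometric_of_represents_one {n : ℕ} {A : Matrix (Fin n) (Fin n) ℤ} (hA : A.IsSymm)
    (h : Represents A (1 : Matrix (Fin n) (Fin n) ℤ)) :
    LatIsometric A (1 : Matrix (Fin n) (Fin n) ℤ) := by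
  refine ⟨h, ?_⟩
  obtain ⟨V, hV⟩ := h
  have h' : V * (Vᵀ * A) = 1 := mul_eq_one_comm.mp hV
  refine ⟨Vᵀ * A, ?_⟩
  rw [transpose_mul, transpose_transpose, hA.eq, Matrix.mul_one, Matrix.mul_assoc, h',
    Matrix.mul_one]

/-- An orthonormal system of `k` vectors extends by any norm-one vector orthogonal to it. -/
theorem represents_one_succ {n k : ℕ} {A : Matrix (Fin n) (Fin n) ℤ} (hA : A.IsSymm)
    {V : Matrix (Fin n) (Fin k) ℤ} (hV : Vᵀ * A * V = 1) {x : Fin n → ℤ}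
    (hx : x ⬝ᵥ A *ᵥ x = 1) (hVx : (Vᵀ * A) *ᵥ x = 0) :
    Represents A (1 : Matrix (Fin (k + 1)) (Fin (k + 1)) ℤ) := by
  have h : Represents A (1 : Matrix (Fin k ⊕ Fin 1) (Fin k ⊕ Fin 1) ℤ) := by
    refine ⟨fromCols V (replicateCol (Fin 1) x), ?_⟩
    have h1 : Vᵀ * A * replicateCol (Fin 1) x = 0 := by
      rw [← replicateCol_mulVec, hVx]; rfl
    have h2 : (replicateCol (Fin 1) x)ᵀ * A * V = 0 := by
      have := congrArg transpose h1
      simpa [transpose_mul, hA.eq, Matrix.mul_assoc] using this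
    have h3 : (replicateCol (Fin 1) x)ᵀ * A * replicateCol (Fin 1) x = 1 := by
      ext i j
      rw [Matrix.mul_assoc, ← replicateCol_mulVec]
      have hij : i = j := Subsingleton.elim _ _
      rw [hij, one_apply_eq]
      exact hx
    rw [transpose_fromCols, fromRows_mul, fromRows_mul_fromCols, hV, h1, h2, h3, fromBlocks_one]
  simpa using h.submatrix (Equiv.refl _) (finSumFinEquiv (m := k) (n := 1)).symm

/-! ### Splitting off the vectors of norm one -/

/-- A rank-`n` positive-definite lattice not isometric to `I_n` is represented by `I_{n-1} ⊥ B`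
for some `B` of minimum at least `2`. -/
theorem exists_min_two_of_not_isometric {n : ℕ} {A : Matrix (Fin n) (Fin n) ℤ}
    (hA : PosDefLat A) (hI : ¬ LatIsometric A (1 : Matrix (Fin n) (Fin n) ℤ)) :
    ∃ (B : Matrix (Fin n) (Fin n) ℤ) (C : Matrix (Fin (n - 1)) (Fin n) ℤ)
      (P : Matrix (Fin n) (Fin n) ℤ), B.IsSymm ∧ (∀ x, x ≠ 0 → 2 ≤ x ⬝ᵥ B *ᵥ x) ∧
      Cᵀ * C + Pᵀ * B * P = A := by
  obtain ⟨hs, hp⟩ := hA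
  -- `A` represents `I_0` but not `I_n`, so for some `k < n` it represents `I_k` but not `I_{k+1}`.
  obtain ⟨k, hkn, ⟨V, hV⟩, hk⟩ : ∃ k < n, Represents A (1 : Matrix (Fin k) (Fin k) ℤ) ∧
      ¬ Represents A (1 : Matrix (Fin (k + 1)) (Fin (k + 1)) ℤ) := by
    by_contra! hcon
    have hall : ∀ k ≤ n, Represents A (1 : Matrix (Fin k) (Fin k) ℤ) := by
      intro k
      induction k with
      | zero => exact fun _ => ⟨0, Subsingleton.elim _ _⟩
      | succ k ih => exact fun h => hcon k (by omega) (ih (by omega))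
    exact hI (latIsometric_of_represents_one hs (hall n le_rfl))
  obtain ⟨D, hD⟩ : ∃ D, D = Vᵀ * A := ⟨_, rfl⟩
  have hDT : Dᵀ = A * V := by rw [hD, transpose_mul, transpose_transpose, hs.eq]
  have hDV : D * V = 1 := by rw [hD, hV]
  have hDP : D * (1 - V * D) = 0 := by
    rw [Matrix.mul_sub, ← Matrix.mul_assoc, hDV, Matrix.mul_one, Matrix.one_mul, sub_self]
  have hAP : A * (1 - V * D) = A - Dᵀ * D := by
    rw [Matrix.mul_sub, ← Matrix.mul_assoc, ← hDT, Matrix.mul_one]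
  have hPD : (1 - V * D)ᵀ * Dᵀ = 0 := by rw [← transpose_mul, hDP, transpose_zero]
  obtain ⟨E, hE⟩ := represents_one_of_le (show k ≤ n - 1 by omega)
  rw [Matrix.mul_one] at hE
  refine ⟨A + Dᵀ * D, E * D, 1 - V * D, ?_, ?_, ?_⟩
  · exact hs.add (by rw [IsSymm, transpose_mul, transpose_transpose])
  · intro x hx
    have hAx := hp x hx
    have hq : x ⬝ᵥ (A + Dᵀ * D) *ᵥ x = x ⬝ᵥ A *ᵥ x + D *ᵥ x ⬝ᵥ D *ᵥ x := by
      rw [add_mulVec, dotProduct_add, ← mulVec_mulVec, dotProduct_mulVec x Dᵀ, vecMul_transpose]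
    have h0 : 0 ≤ D *ᵥ x ⬝ᵥ D *ᵥ x := Finset.sum_nonneg fun i _ => mul_self_nonneg _
    rw [hq]
    by_contra hlt
    refine hk (represents_one_succ hs hV (x := x) (by omega) ?_)
    rw [← hD]
    exact dotProduct_self_eq_zero.mp (by omega)
  · have h1 : (E * D)ᵀ * (E * D) = Dᵀ * D := by
      rw [transpose_mul, Matrix.mul_assoc, ← Matrix.mul_assoc Eᵀ, hE, Matrix.one_mul]
    have h2 : (A + Dᵀ * D) * (1 - V * D) = A - Dᵀ * D := by
      rw [Matrix.add_mul, Matrix.mul_assoc Dᵀ, hDP, Matrix.mul_zero, add_zero, hAP]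
    have h3 : (1 - V * D)ᵀ * A = A - Dᵀ * D := by
      have := congrArg transpose hAP
      rwa [transpose_mul, hs.eq, transpose_sub A, hs.eq, transpose_mul Dᵀ, transpose_transpose] at this
    rw [h1, Matrix.mul_assoc, h2, Matrix.mul_sub, ← Matrix.mul_assoc, hPD, Matrix.zero_mul, h3]
    abel

/-! ### The orthogonal sum of `I_m` and a lattice of minimum at least two -/

theorem dotProduct_fromBlocks_mulVec {ι κ : Type} [Fintype ι] [Fintype κ] [DecidableEq ι]
    (B : Matrix κ κ ℤ) (x : ι ⊕ κ → ℤ) :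
    x ⬝ᵥ (fromBlocks (1 : Matrix ι ι ℤ) 0 0 B) *ᵥ x =
      (x ∘ Sum.inl) ⬝ᵥ (x ∘ Sum.inl) + (x ∘ Sum.inr) ⬝ᵥ B *ᵥ (x ∘ Sum.inr) := by
  rw [fromBlocks_mulVec]
  simp [dotProduct, Fintype.sum_sum_type]

theorem posDefLat_fromBlocks_one {ι κ : Type} [Fintype ι] [Fintype κ] [DecidableEq ι]
    {B : Matrix κ κ ℤ} (hs : B.IsSymm) (hB : ∀ x, x ≠ 0 → 2 ≤ x ⬝ᵥ B *ᵥ x) :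
    PosDefLat (fromBlocks (1 : Matrix ι ι ℤ) 0 0 B) := by
  refine ⟨isSymm_one.fromBlocks (by simp) hs, fun x hx => ?_⟩
  rw [dotProduct_fromBlocks_mulVec]
  have h0 : 0 ≤ (x ∘ Sum.inl) ⬝ᵥ (x ∘ Sum.inl) := Finset.sum_nonneg fun i _ => mul_self_nonneg _
  by_cases hr : x ∘ Sum.inr = 0
  · have hl : x ∘ Sum.inl ≠ 0 := fun hl => hx <| by
      ext (i | i)
      · exact congrFun hl i
      · exact congrFun hr i
    rw [hr, zero_dotProduct, add_zero]
    exact lt_of_le_of_ne h0 fun h => hl (dotProduct_self_eq_zero.mp h.symm)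
  · have := hB _ hr
    omega

/-- If `B` has minimum at least `2`, then `I_m ⊥ B` contains at most `m` orthonormal vectors. -/
theorem not_represents_one_of_lt {m n : ℕ} {κ : Type} [Fintype κ] {B : Matrix κ κ ℤ}
    (hB : ∀ x, x ≠ 0 → 2 ≤ x ⬝ᵥ B *ᵥ x) (hmn : m < n) :
    ¬ Represents (fromBlocks (1 : Matrix (Fin m) (Fin m) ℤ) 0 0 B)
      (1 : Matrix (Fin n) (Fin n) ℤ) := by
  rintro ⟨M, hM⟩
  -- A column of `M` has norm `1`, which leaves no room for a nonzero component in `B`.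
  have hz : M.toRows₂ = 0 := by
    ext i j
    have hj := congrFun (congrFun hM j) j
    have hq : M.col j ⬝ᵥ (fromBlocks (1 : Matrix (Fin m) (Fin m) ℤ) 0 0 B) *ᵥ M.col j = 1 := by
      rw [one_apply_eq, Matrix.mul_assoc] at hj
      exact hj
    rw [dotProduct_fromBlocks_mulVec] at hq
    have h0 : 0 ≤ (M.col j ∘ Sum.inl) ⬝ᵥ (M.col j ∘ Sum.inl) :=
      Finset.sum_nonneg fun i _ => mul_self_nonneg _
    by_contra hne
    have := hB (M.col j ∘ Sum.inr) fun h => hne (congrFun h i)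
    omega
  rw [← fromRows_toRows M, hz, transpose_fromRows, fromCols_mul_fromBlocks,
    fromCols_mul_fromRows] at hM
  simp only [transpose_zero, Matrix.mul_one, Matrix.mul_zero, add_zero] at hM
  have h1 := rank_mul_le_right (M.toRows₁)ᵀ M.toRows₁
  rw [hM, rank_one, Fintype.card_fin] at h1
  have h2 := rank_le_height M.toRows₁
  omega

/-- A finite orthogonal sum of lattices of minimum at least `2` has minimum at least `2`. -/
theorem blockDiagonal_min_two {ι τ : Type} [Fintype ι] [Fintype τ] [DecidableEq τ]
    {B : τ → Matrix ι ι ℤ} (hB : ∀ t x, x ≠ 0 → 2 ≤ x ⬝ᵥ B t *ᵥ x) (x : ι × τ → ℤ) (hx : x ≠ 0) :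
    2 ≤ x ⬝ᵥ blockDiagonal B *ᵥ x := by
  have hq : x ⬝ᵥ blockDiagonal B *ᵥ x =
      ∑ t, (fun i => x (i, t)) ⬝ᵥ B t *ᵥ (fun i => x (i, t)) := by
    simp only [dotProduct, mulVec, Fintype.sum_prod_type_right, blockDiagonal_apply]
    refine Finset.sum_congr rfl fun t _ => Finset.sum_congr rfl fun i _ => ?_
    congr 1
    rw [Finset.sum_eq_single t]
    · simp
    · intro s _ hs
      simp [Ne.symm hs]
    · simp
  obtain ⟨⟨i, t⟩, hit⟩ := Function.ne_iff.mp hx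
  rw [hq]
  refine (hB t _ fun h => hit (congrFun h i)).trans (Finset.single_le_sum
    (f := fun t => (fun i => x (i, t)) ⬝ᵥ B t *ᵥ (fun i => x (i, t))) (fun s _ => ?_)
    (Finset.mem_univ t))
  by_cases hs : (fun i => x (i, s)) = 0
  · simp only [hs, zero_dotProduct, le_refl]
  · exact zero_le_two.trans (hB s _ hs)

/-- The lattice built here is `I_{n-1} ⊥ (⊥ B_A)`, with `B_A` from `exists_min_two_of_not_isometric`
for each `A ∈ T`. -/
theorem exists_represents_all_not_one {n : ℕ} (hn : 0 < n)
    (T : Finset (Matrix (Fin n) (Fin n) ℤ)) (hT : ∀ A ∈ T, PosDefLat A)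
    (hI : ∀ A ∈ T, ¬ LatIsometric A (1 : Matrix (Fin n) (Fin n) ℤ)) :
    ∃ (m : ℕ) (L : Matrix (Fin m) (Fin m) ℤ), PosDefLat L ∧
      (∀ A ∈ T, Represents L A) ∧ ¬ Represents L (1 : Matrix (Fin n) (Fin n) ℤ) := by
  choose B C P hBs hB hA using fun A : T =>
    exists_min_two_of_not_isometric (hT A A.2) (hI A A.2)
  have hmin := blockDiagonal_min_two hB
  have hsymm : (blockDiagonal B).IsSymm := by
    rw [IsSymm, blockDiagonal_transpose]
    exact congrArg _ (funext fun A => (hBs A).eq)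
  obtain ⟨L, hL⟩ : ∃ L, L = fromBlocks (1 : Matrix (Fin (n - 1)) (Fin (n - 1)) ℤ) 0 0
    (blockDiagonal B) := ⟨_, rfl⟩
  have hpos : PosDefLat L := hL ▸ posDefLat_fromBlocks_one hsymm hmin
  have hno : ¬ Represents L (1 : Matrix (Fin n) (Fin n) ℤ) :=
    hL ▸ not_represents_one_of_lt hmin (by omega)
  have hrep : ∀ A ∈ T, Represents L A := by
    intro A hAT
    have hB' : Represents (blockDiagonal B) (B ⟨A, hAT⟩) := by
      refine ⟨of fun p j => if p.1 = j ∧ p.2 = ⟨A, hAT⟩ then 1 else 0, ?_⟩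
      ext i j
      simp [Matrix.mul_apply, Fintype.sum_prod_type, blockDiagonal_apply, ite_and]
    obtain ⟨N, hN⟩ := hB'
    refine ⟨fromRows (C ⟨A, hAT⟩) (N * P ⟨A, hAT⟩), ?_⟩
    rw [hL, transpose_fromRows, fromCols_mul_fromBlocks, fromCols_mul_fromRows]
    refine Eq.trans ?_ (hA ⟨A, hAT⟩)
    rw [← hN]
    simp only [transpose_mul, Matrix.mul_assoc, Matrix.mul_one, Matrix.mul_zero, add_zero,
      zero_add]
  -- Transport from the natural index type to `Fin m`.
  obtain ⟨m, ⟨e⟩⟩ := Finite.exists_equiv_fin (Fin (n - 1) ⊕ Fin n × T)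
  refine ⟨m, L.submatrix e.symm e.symm, ⟨hpos.1.submatrix _, fun x hx => ?_⟩, fun A hAT => ?_,
    fun h => hno ?_⟩
  · have hx' : x ∘ e ≠ 0 := fun h => hx <| funext fun i => by simpa using congrFun h (e.symm i)
    have := hpos.2 _ hx'
    rwa [submatrix_mulVec_equiv, Equiv.symm_symm, dotProduct_comp_equiv_symm]
  · simpa using (hrep A hAT).submatrix e.symm (Equiv.refl _)
  · simpa using h.submatrix e (Equiv.refl _)

/-- Any `n`-criterion set must contain `I_n`.  Equivalently, any finite nonempty
set of positive-definite rank-`n` lattices avoiding (the isometry class of) `I_n`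
is represented by a single lattice which does not represent `I_n` and hence is
not `n`-universal. -/
theorem criterion_set_contains_In (n : ℕ) (hn : 0 < n) :
    (∀ S : Finset (Matrix (Fin n) (Fin n) ℤ), IsCriterionSet n S →
      ∃ A ∈ S, LatIsometric A (1 : Matrix (Fin n) (Fin n) ℤ)) ∧
    (∀ T : Finset (Matrix (Fin n) (Fin n) ℤ), T.Nonempty →
      (∀ A ∈ T, PosDefLat A) →
      (∀ A ∈ T, ¬ LatIsometric A (1 : Matrix (Fin n) (Fin n) ℤ)) →
      ∃ (m : ℕ) (L : Matrix (Fin m) (Fin m) ℤ), PosDefLat L ∧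
        (∀ A ∈ T, Represents L A) ∧
        ¬ Represents L (1 : Matrix (Fin n) (Fin n) ℤ) ∧
        ¬ NUniversal n L) := by
  have key : ∀ T : Finset (Matrix (Fin n) (Fin n) ℤ), (∀ A ∈ T, PosDefLat A) →
      (∀ A ∈ T, ¬ LatIsometric A (1 : Matrix (Fin n) (Fin n) ℤ)) →
      ∃ (m : ℕ) (L : Matrix (Fin m) (Fin m) ℤ), PosDefLat L ∧
        (∀ A ∈ T, Represents L A) ∧
        ¬ Represents L (1 : Matrix (Fin n) (Fin n) ℤ) ∧ ¬ NUniversal n L := by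
    intro T hT hI
    obtain ⟨m, L, hL, hrep, hno⟩ := exists_represents_all_not_one hn T hT hI
    exact ⟨m, L, hL, hrep, hno, fun h => hno (h 1 (posDefLat_one n))⟩
  refine ⟨fun S hS => ?_, fun T _ => key T⟩
  by_contra! hcon
  obtain ⟨m, L, hL, hrep, -, hnu⟩ := key S hS.1 hcon
  exact hnu ((hS.2 m L hL).mpr hrep)
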